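/- Logarithmic uncertainty principle for the QP-WPT: let f and ψ be Schwartz functions on ℝ and fix α > 0. Then ‖ψ‖²_{L²(ℝ)} · ∫_ℝ ln|t| · |f(t)|² dt + ∫_ℝ ∫_ℝ ln|ξ| · |W^μ_f(ξ, β, α)|² dξ dβ ≥ (Γ'(1/4)/Γ(1/4) − ln π − ln b) · ‖f‖²_{L²(ℝ)} ‖ψ‖²_{L²(ℝ)}, where Γ'(1/4)/Γ(1/4) is the logarithmic derivative of the Gamma function at 1/4. -/

import Mathlib

open MeasureTheory Complex

/-- The constant √(b/(2πi)) = √(b/(2π))·e^{−iπ/4}. -/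
noncomputable def qpConst (b : ℝ) : ℂ :=
  (Real.sqrt (b / (2 * Real.pi)) : ℂ) * Complex.exp (-((Real.pi / 4 : ℝ) : ℂ) * Complex.I)

/-- The dilation ψ_α(t) = α^{−1/2} ψ(t/α). -/
noncomputable def dil (ψ : ℝ → ℂ) (α : ℝ) (t : ℝ) : ℂ :=
  ((α ^ (-(1 / 2 : ℝ)) : ℝ) : ℂ) * ψ (t / α)

/-- The quadratic-phase Fourier transform. -/
noncomputable def QPFT (a b c d e : ℝ) (f : ℝ → ℂ) (ξ : ℝ) : ℂ :=
  qpConst b * ∫ t : ℝ, f t *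
    Complex.exp (Complex.I * ((a * t ^ 2 + b * t * ξ + c * ξ ^ 2 + d * t + e * ξ : ℝ) : ℂ))

/-- The quadratic-phase wave packet transform of `f` with respect to the wavelet `ψ`. -/
noncomputable def QPWPT (a b c d e : ℝ) (ψ f : ℝ → ℂ) (ξ β α : ℝ) : ℂ :=
  qpConst b * ∫ t : ℝ,
    Complex.exp (Complex.I * ((2 * a * t ^ 2 + b * t * ξ + c * ξ ^ 2 + 2 * d * t + e * ξ
      - a * β ^ 2 - d * β : ℝ) : ℂ)) * f t * (starRingEnd ℂ) (dil ψ α (t - β))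

/-- The analyzing packet ψ^μ_{ξ,β,α}. -/
noncomputable def qpwPacket (a b c d e : ℝ) (ψ : ℝ → ℂ) (ξ β α : ℝ) (t : ℝ) : ℂ :=
  (starRingEnd ℂ) (qpConst b) *
    Complex.exp (-Complex.I * ((2 * a * t ^ 2 + b * t * ξ + c * ξ ^ 2 + 2 * d * t + e * ξ
      - a * β ^ 2 - d * β : ℝ) : ℂ)) * dil ψ α (t - β)

/-!
In the variable `ξ`, the transform `W^μ_f(·, β, α)` is, up to a unimodular factor and a dilation by
`-b / 2π`, the Fourier transform of `f` multiplied by a chirp and by the window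
`t ↦ conj (ψ_α (t - β))`. The logarithmic uncertainty principle for the Fourier transform applies to
this product, and `∫ |ψ_α (t - β)|² dβ = ‖ψ‖²` for every `t`, so integrating over `β` gives the
claim. The dilation turns Beckner's constant `Γ'(1/4)/Γ(1/4) - log π` into
`Γ'(1/4)/Γ(1/4) + log 2 - log b`.

The principle for the Fourier transform follows Beckner: Pitt's inequality
`∫ |ξ|^{-s} |ĝ(ξ)|² dξ ≤ C(s) ∫ |x|^s |g(x)|² dx` becomes Plancherel's equality at `s = 0`, so the
right derivatives of its two sides at `0` are ordered. The sharp `C(s)` comes from writing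
`|ξ|^{-s}` as a superposition of Gaussians, which turns the left side into a quadratic form with
kernel a multiple of `|x - y|^{s-1}`, and from Schur's test with the weight `|x|^{-(1+s)/2}`.
-/

open Set Filter Topology
open scoped ENNReal NNReal FourierTransform SchwartzMap

section SpecialIntegrals

variable {k m p q r l x : ℝ}

lemma lintegral_rpow_mul_exp_neg_mul_Ioi (hp : 0 < p) (hr : 0 < r) :
    ∫⁻ t in Ioi (0 : ℝ), ENNReal.ofReal (t ^ (p - 1) * Real.exp (-(r * t)))
      = ENNReal.ofReal (Real.Gamma p * r ^ (-p)) := by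
  have eval := Real.integral_rpow_mul_exp_neg_mul_Ioi hp hr
  have integrable := Integrable.of_integral_ne_zero
    (eval.trans_ne (by positivity : (1 / r) ^ p * Real.Gamma p ≠ 0))
  rw [← ofReal_integral_eq_lintegral_ofReal integrable, eval, one_div, Real.inv_rpow hr.le,
    Real.rpow_neg hr.le, mul_comm]
  filter_upwards [ae_restrict_mem measurableSet_Ioi] with t (ht : 0 < t)
  positivity

lemma lintegral_comp_mul_left_Ioi (hm : 0 < m) (F : ℝ → ℝ≥0∞) :
    ∫⁻ t in Ioi (0 : ℝ), F (m * t) = ENNReal.ofReal m⁻¹ * ∫⁻ t in Ioi (0 : ℝ), F t := by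
  have change := lintegral_image_eq_lintegral_abs_deriv_mul (measurableSet_Ioi (a := (0 : ℝ)))
    (fun x _ ↦ ((hasDerivAt_id x).const_mul m).hasDerivWithinAt)
    ((mul_right_injective₀ hm.ne').injOn) F
  simp only [id_eq, mul_one, Set.image_mul_left_Ioi hm, mul_zero, abs_of_pos hm] at change
  rw [change, lintegral_const_mul' _ _ ENNReal.ofReal_ne_top, ← mul_assoc,
    ← ENNReal.ofReal_mul (by positivity), inv_mul_cancel₀ hm.ne', ENNReal.ofReal_one, one_mul]

lemma lintegral_rpow_mul_comp_mul_left_Ioi (hm : 0 < m) (p : ℝ) (F : ℝ → ℝ≥0∞) :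
    ∫⁻ t in Ioi (0 : ℝ), ENNReal.ofReal (t ^ (p - 1)) * F (m * t)
      = ENNReal.ofReal (m ^ (-p)) * ∫⁻ t in Ioi (0 : ℝ), ENNReal.ofReal (t ^ (p - 1)) * F t := by
  have factor : ∀ t ∈ Ioi (0 : ℝ), ENNReal.ofReal (t ^ (p - 1)) * F (m * t)
      = ENNReal.ofReal (m ^ (1 - p)) * (ENNReal.ofReal ((m * t) ^ (p - 1)) * F (m * t)) := by
    intro t (ht : 0 < t)
    rw [← mul_assoc, ← ENNReal.ofReal_mul (by positivity), Real.mul_rpow hm.le ht.le, ← mul_assoc,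
      ← Real.rpow_add hm, sub_add_sub_cancel, sub_self, Real.rpow_zero, one_mul]
  rw [setLIntegral_congr_fun measurableSet_Ioi factor,
    lintegral_const_mul' _ _ ENNReal.ofReal_ne_top,
    lintegral_comp_mul_left_Ioi hm fun t ↦ ENNReal.ofReal (t ^ (p - 1)) * F t, ← mul_assoc,
    ← ENNReal.ofReal_mul (by positivity), ← Real.rpow_neg_one, ← Real.rpow_add hm,
    sub_add_eq_add_sub, add_neg_cancel, zero_sub]

lemma lintegral_rpow_mul_one_add_rpow_Ioi (hp : 0 < p) (hq : 0 < q) :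
    ∫⁻ ν in Ioi (0 : ℝ), ENNReal.ofReal (ν ^ (p - 1) * (1 + ν) ^ (-(p + q)))
      = ENNReal.ofReal (Real.Gamma p * Real.Gamma q / Real.Gamma (p + q)) := by
  have Gamma_add_mul : ENNReal.ofReal (Real.Gamma (p + q)) *
      ∫⁻ ν in Ioi (0 : ℝ), ENNReal.ofReal (ν ^ (p - 1) * (1 + ν) ^ (-(p + q)))
      = ENNReal.ofReal (Real.Gamma p * Real.Gamma q) := by
    calc
      _ = ∫⁻ ν in Ioi (0 : ℝ), ∫⁻ τ in Ioi (0 : ℝ), ENNReal.ofReal (ν ^ (p - 1)) *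
            ENNReal.ofReal (τ ^ (p + q - 1) * Real.exp (-((1 + ν) * τ))) := by
        rw [← lintegral_const_mul' _ _ ENNReal.ofReal_ne_top]
        refine setLIntegral_congr_fun measurableSet_Ioi fun ν (hν : 0 < ν) ↦ ?_
        rw [lintegral_const_mul' _ _ ENNReal.ofReal_ne_top,
          lintegral_rpow_mul_exp_neg_mul_Ioi (by positivity) (by positivity),
          ← ENNReal.ofReal_mul (by positivity), ← ENNReal.ofReal_mul (by positivity)]
        ring_nf
      _ = ∫⁻ τ in Ioi (0 : ℝ), ∫⁻ ν in Ioi (0 : ℝ), ENNReal.ofReal (ν ^ (p - 1)) *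
            ENNReal.ofReal (τ ^ (p + q - 1) * Real.exp (-((1 + ν) * τ))) :=
        lintegral_lintegral_swap (by unfold Function.uncurry; fun_prop)
      _ = ∫⁻ τ in Ioi (0 : ℝ), ENNReal.ofReal (Real.Gamma p) *
            ENNReal.ofReal (τ ^ (q - 1) * Real.exp (-(1 * τ))) := by
        refine setLIntegral_congr_fun measurableSet_Ioi fun τ (hτ : 0 < τ) ↦ ?_
        have factor : ∀ ν ∈ Ioi (0 : ℝ), ENNReal.ofReal (ν ^ (p - 1)) *
              ENNReal.ofReal (τ ^ (p + q - 1) * Real.exp (-((1 + ν) * τ)))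
            = ENNReal.ofReal (τ ^ (p + q - 1) * Real.exp (-τ)) *
              ENNReal.ofReal (ν ^ (p - 1) * Real.exp (-(τ * ν))) := by
          intro ν (hν : 0 < ν)
          rw [← ENNReal.ofReal_mul (by positivity), ← ENNReal.ofReal_mul (by positivity),
            show -((1 + ν) * τ) = -τ + -(τ * ν) by ring, Real.exp_add]
          ring_nf
        rw [setLIntegral_congr_fun measurableSet_Ioi factor,
          lintegral_const_mul' _ _ ENNReal.ofReal_ne_top, lintegral_rpow_mul_exp_neg_mul_Ioi hp hτ,
          ← ENNReal.ofReal_mul (by positivity), ← ENNReal.ofReal_mul (by positivity),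
          show q - 1 = (p + q - 1) + (-p) by ring, Real.rpow_add hτ]
        ring_nf
      _ = _ := by
        rw [lintegral_const_mul' _ _ ENNReal.ofReal_ne_top,
          lintegral_rpow_mul_exp_neg_mul_Ioi hq one_pos, ← ENNReal.ofReal_mul (by positivity),
          Real.one_rpow, mul_one]
  have Gamma_pos : 0 < Real.Gamma (p + q) := by positivity
  rw [ENNReal.ofReal_div_of_pos Gamma_pos, ← Gamma_add_mul, mul_comm,
    ENNReal.mul_div_cancel_right (by simpa using Gamma_pos) ENNReal.ofReal_ne_top]

lemma lintegral_rpow_mul_exp_neg_pi_mul_sq_Ioi (hk : 0 < k) (hx : x ≠ 0) :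
    ∫⁻ m in Ioi (0 : ℝ), ENNReal.ofReal (m ^ (k - 1) * Real.exp (-(Real.pi * x ^ 2 * m)))
      = ENNReal.ofReal (Real.Gamma k * Real.pi ^ (-k) * |x| ^ (-(2 * k))) := by
  rw [lintegral_rpow_mul_exp_neg_mul_Ioi hk (by positivity), ← sq_abs x,
    Real.mul_rpow (by positivity) (by positivity), ← Real.rpow_two, ← Real.rpow_mul (abs_nonneg x),
    mul_neg, mul_assoc]

/-- The `L¹`-normalised Gaussian `l^{-1/2} e^{-π z² / l}`, i.e. the heat kernel on `ℝ` at time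
`l / (4π)` and the Fourier transform of `ξ ↦ e^{-π l ξ²}`. -/
noncomputable def gaussianKernel (l z : ℝ) : ℝ :=
  l ^ (-(1 / 2) : ℝ) * Real.exp (-(Real.pi * z ^ 2 / l))

lemma gaussianKernel_nonneg (hl : 0 ≤ l) (z : ℝ) : 0 ≤ gaussianKernel l z := by
  unfold gaussianKernel
  positivity

lemma gaussianKernel_neg (l z : ℝ) : gaussianKernel l (-z) = gaussianKernel l z := by
  simp only [gaussianKernel, neg_sq]

@[fun_prop]
lemma measurable_gaussianKernel : Measurable fun z : ℝ × ℝ ↦ gaussianKernel z.1 z.2 := by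
  unfold gaussianKernel
  fun_prop

lemma lintegral_exp_neg_mul_gaussianKernel (hl : 0 < l) (hm : 0 < m) (x : ℝ) :
    ∫⁻ y, ENNReal.ofReal (Real.exp (-(Real.pi * y ^ 2 * m)) * gaussianKernel l (x - y))
      = ENNReal.ofReal ((1 + m * l) ^ (-(1 / 2) : ℝ) *
        Real.exp (-(Real.pi * x ^ 2 / (1 + m * l) * m))) := by
  set B : ℝ := Real.pi * (1 + m * l) / l with hB
  have hB_pos : 0 < B := by positivity
  have complete_square (y : ℝ) :
      Real.exp (-(Real.pi * y ^ 2 * m)) * gaussianKernel l (x - y)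
        = (l ^ (-(1 / 2) : ℝ) * Real.exp (-(Real.pi * x ^ 2 / (1 + m * l) * m))) *
          Real.exp (-B * (y - x / (1 + m * l)) ^ 2) := by
    rw [gaussianKernel, mul_left_comm, mul_assoc (l ^ _), ← Real.exp_add, ← Real.exp_add]
    congr 2
    rw [hB]
    field_simp
    ring
  have normalisation : l ^ (-(1 / 2) : ℝ) * √(Real.pi / B) = (1 + m * l) ^ (-(1 / 2) : ℝ) := by
    rw [hB, show Real.pi / (Real.pi * (1 + m * l) / l) = l * (1 + m * l)⁻¹ by field_simp,
      Real.sqrt_eq_rpow, Real.mul_rpow hl.le (by positivity), Real.inv_rpow (by positivity),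
      Real.rpow_neg hl.le, Real.rpow_neg (by positivity), inv_mul_cancel_left₀ (by positivity)]
  simp_rw [complete_square]
  rw [← ofReal_integral_eq_lintegral_ofReal
      (((integrable_exp_neg_mul_sq hB_pos).comp_sub_right _).const_mul _)
      (.of_forall fun y ↦ by positivity),
    integral_const_mul, integral_sub_right_eq_self (fun y ↦ Real.exp (-B * y ^ 2)),
    integral_gaussian, mul_right_comm, normalisation]

lemma lintegral_abs_rpow_mul_gaussianKernel (hk : 0 < k) (hl : 0 < l) (x : ℝ) :
    ∫⁻ y, ENNReal.ofReal (Real.Gamma k * Real.pi ^ (-k) * |y| ^ (-(2 * k))) *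
        ENNReal.ofReal (gaussianKernel l (x - y))
      = ∫⁻ m in Ioi (0 : ℝ), ENNReal.ofReal (m ^ (k - 1) * ((1 + m * l) ^ (-(1 / 2) : ℝ) *
          Real.exp (-(Real.pi * x ^ 2 / (1 + m * l) * m)))) := by
  calc
    _ = ∫⁻ y, ∫⁻ m in Ioi (0 : ℝ),
          ENNReal.ofReal (m ^ (k - 1) * Real.exp (-(Real.pi * y ^ 2 * m))) *
            ENNReal.ofReal (gaussianKernel l (x - y)) := by
      refine lintegral_congr_ae ?_
      filter_upwards [Measure.ae_ne volume 0] with y hy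
      rw [lintegral_mul_const' _ _ ENNReal.ofReal_ne_top,
        lintegral_rpow_mul_exp_neg_pi_mul_sq_Ioi hk hy]
    _ = ∫⁻ m in Ioi (0 : ℝ), ∫⁻ y,
          ENNReal.ofReal (m ^ (k - 1) * Real.exp (-(Real.pi * y ^ 2 * m))) *
            ENNReal.ofReal (gaussianKernel l (x - y)) :=
      lintegral_lintegral_swap (by unfold Function.uncurry; fun_prop)
    _ = _ := by
      refine setLIntegral_congr_fun measurableSet_Ioi fun m (hm : 0 < m) ↦ ?_
      have factor (y : ℝ) : ENNReal.ofReal (m ^ (k - 1) * Real.exp (-(Real.pi * y ^ 2 * m))) *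
            ENNReal.ofReal (gaussianKernel l (x - y))
          = ENNReal.ofReal (m ^ (k - 1)) * ENNReal.ofReal
            (Real.exp (-(Real.pi * y ^ 2 * m)) * gaussianKernel l (x - y)) := by
        rw [← ENNReal.ofReal_mul (by positivity), ← ENNReal.ofReal_mul (by positivity), mul_assoc]
      simp_rw [factor]
      rw [lintegral_const_mul' _ _ ENNReal.ofReal_ne_top,
        lintegral_exp_neg_mul_gaussianKernel hl hm, ← ENNReal.ofReal_mul (by positivity)]

lemma lintegral_lintegral_rpow_mul_exp_Ioi (hp : 0 < p) (hpk : p < k) (hk : k < 1 / 2)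
    (hx : x ≠ 0) :
    ∫⁻ l in Ioi (0 : ℝ), ∫⁻ m in Ioi (0 : ℝ), ENNReal.ofReal (l ^ (p - 1)) *
        ENNReal.ofReal (m ^ (k - 1) * ((1 + m * l) ^ (-(1 / 2) : ℝ) *
          Real.exp (-(Real.pi * x ^ 2 / (1 + m * l) * m))))
      = ENNReal.ofReal (Real.Gamma (k - p) * (Real.pi * x ^ 2) ^ (-(k - p)) *
          (Real.Gamma p * Real.Gamma (1 / 2 - k) / Real.Gamma (p + (1 / 2 - k)))) := by
  have hkp : 0 < k - p := sub_pos.2 hpk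
  have inner_integral : ∀ ν ∈ Ioi (0 : ℝ), ∫⁻ m in Ioi (0 : ℝ),
        ENNReal.ofReal (m ^ (-p)) * (ENNReal.ofReal (ν ^ (p - 1)) *
          ENNReal.ofReal (m ^ (k - 1) * ((1 + ν) ^ (-(1 / 2) : ℝ) *
            Real.exp (-(Real.pi * x ^ 2 / (1 + ν) * m)))))
      = ENNReal.ofReal (Real.Gamma (k - p) * (Real.pi * x ^ 2) ^ (-(k - p))) *
        ENNReal.ofReal (ν ^ (p - 1) * (1 + ν) ^ (-(p + (1 / 2 - k)))) := by
    intro ν (hν : 0 < ν)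
    have factor : ∀ m ∈ Ioi (0 : ℝ),
          ENNReal.ofReal (m ^ (-p)) * (ENNReal.ofReal (ν ^ (p - 1)) *
            ENNReal.ofReal (m ^ (k - 1) * ((1 + ν) ^ (-(1 / 2) : ℝ) *
              Real.exp (-(Real.pi * x ^ 2 / (1 + ν) * m)))))
        = ENNReal.ofReal (ν ^ (p - 1) * (1 + ν) ^ (-(1 / 2) : ℝ)) *
          ENNReal.ofReal (m ^ (k - p - 1) * Real.exp (-(Real.pi * x ^ 2 / (1 + ν) * m))) := by
      intro m (hm : 0 < m)
      rw [← ENNReal.ofReal_mul (by positivity), ← ENNReal.ofReal_mul (by positivity),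
        ← ENNReal.ofReal_mul (by positivity), show k - p - 1 = -p + (k - 1) by ring,
        Real.rpow_add hm]
      ring_nf
    rw [setLIntegral_congr_fun measurableSet_Ioi factor,
      lintegral_const_mul' _ _ ENNReal.ofReal_ne_top,
      lintegral_rpow_mul_exp_neg_mul_Ioi hkp (by positivity),
      ← ENNReal.ofReal_mul (by positivity), ← ENNReal.ofReal_mul (by positivity),
      show -(p + (1 / 2 - k)) = -(1 / 2) + (k - p) by ring, Real.rpow_add (by positivity),
      Real.div_rpow (by positivity) (by positivity), Real.rpow_neg (by positivity : 0 ≤ 1 + ν)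
        (k - p), div_inv_eq_mul]
    ring_nf
  rw [lintegral_lintegral_swap (by unfold Function.uncurry; fun_prop)]
  -- the substitution `ν = m * l` decouples the two variables up to a Gamma integral in `m`
  rw [setLIntegral_congr_fun measurableSet_Ioi fun m (hm : 0 < m) ↦
    (lintegral_rpow_mul_comp_mul_left_Ioi hm p fun ν ↦ ENNReal.ofReal (m ^ (k - 1) *
      ((1 + ν) ^ (-(1 / 2) : ℝ) * Real.exp (-(Real.pi * x ^ 2 / (1 + ν) * m))))).trans
      (lintegral_const_mul' _ _ ENNReal.ofReal_ne_top).symm]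
  rw [lintegral_lintegral_swap (by unfold Function.uncurry; fun_prop),
    setLIntegral_congr_fun measurableSet_Ioi inner_integral,
    lintegral_const_mul' _ _ ENNReal.ofReal_ne_top,
    lintegral_rpow_mul_one_add_rpow_Ioi hp (sub_pos.2 hk), ← ENNReal.ofReal_mul (by positivity)]

/-- The Riesz kernel of order `2 p`, presented as a mixture of Gaussian kernels. For `0 < p < 1 / 2`
it equals `Γ(1/2 - p) π^{p - 1/2} |z|^{2 p - 1}`, but every use below goes through the mixture. -/
noncomputable def rieszKernel (p z : ℝ) : ℝ≥0∞ :=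
  ∫⁻ l in Ioi (0 : ℝ), ENNReal.ofReal (l ^ (p - 1)) * ENNReal.ofReal (gaussianKernel l z)

lemma rieszKernel_neg (p z : ℝ) : rieszKernel p (-z) = rieszKernel p z := by
  simp only [rieszKernel, gaussianKernel_neg]

@[fun_prop]
lemma measurable_rieszKernel (p : ℝ) : Measurable (rieszKernel p) :=
  Measurable.lintegral_prod_right' (f := fun z : ℝ × ℝ ↦
    ENNReal.ofReal (z.2 ^ (p - 1)) * ENNReal.ofReal (gaussianKernel z.2 z.1)) (by fun_prop)

lemma lintegral_abs_rpow_mul_rieszKernel (hp : 0 < p) (hpk : p < k) (hk : k < 1 / 2) (hx : x ≠ 0) :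
    ∫⁻ y, ENNReal.ofReal (|y| ^ (-(2 * k))) * rieszKernel p (x - y)
      = ENNReal.ofReal (Real.pi ^ p * Real.Gamma p *
          (Real.Gamma (k - p) * Real.Gamma (1 / 2 - k) /
            (Real.Gamma k * Real.Gamma (1 / 2 - k + p))) * |x| ^ (2 * (p - k))) := by
  have hk_pos : 0 < k := hp.trans hpk
  have hkp : 0 < k - p := sub_pos.2 hpk
  set c : ℝ := Real.Gamma k * Real.pi ^ (-k) with hc
  have c_pos : 0 < c := by positivity
  have scaled : ENNReal.ofReal c * ∫⁻ y, ENNReal.ofReal (|y| ^ (-(2 * k))) * rieszKernel p (x - y)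
      = ENNReal.ofReal (Real.Gamma (k - p) * (Real.pi * x ^ 2) ^ (-(k - p)) *
          (Real.Gamma p * Real.Gamma (1 / 2 - k) / Real.Gamma (p + (1 / 2 - k)))) := by
    rw [← lintegral_lintegral_rpow_mul_exp_Ioi hp hpk hk hx]
    calc
      _ = ∫⁻ y, ∫⁻ l in Ioi (0 : ℝ), ENNReal.ofReal (l ^ (p - 1)) *
            (ENNReal.ofReal (c * |y| ^ (-(2 * k))) *
              ENNReal.ofReal (gaussianKernel l (x - y))) := by
        rw [← lintegral_const_mul' _ _ ENNReal.ofReal_ne_top]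
        refine lintegral_congr fun y ↦ ?_
        rw [← mul_assoc, ← ENNReal.ofReal_mul c_pos.le, rieszKernel,
          ← lintegral_const_mul' _ _ ENNReal.ofReal_ne_top]
        exact lintegral_congr fun l ↦ mul_left_comm _ _ _
      _ = ∫⁻ l in Ioi (0 : ℝ), ∫⁻ y, ENNReal.ofReal (l ^ (p - 1)) *
            (ENNReal.ofReal (c * |y| ^ (-(2 * k))) *
              ENNReal.ofReal (gaussianKernel l (x - y))) :=
        lintegral_lintegral_swap (by unfold Function.uncurry; fun_prop)
      _ = _ := by
        refine setLIntegral_congr_fun measurableSet_Ioi fun l (hl : 0 < l) ↦ ?_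
        rw [lintegral_const_mul' _ _ ENNReal.ofReal_ne_top,
          lintegral_abs_rpow_mul_gaussianKernel hk_pos hl,
          lintegral_const_mul' _ _ ENNReal.ofReal_ne_top]
  refine (ENNReal.mul_right_inj (by simpa using c_pos) ENNReal.ofReal_ne_top).1 (scaled.trans ?_)
  rw [← ENNReal.ofReal_mul c_pos.le, hc, Real.mul_rpow (by positivity) (by positivity), ← sq_abs x,
    ← Real.rpow_two, ← Real.rpow_mul (abs_nonneg x), show -(k - p) = -k + p by ring,
    Real.rpow_add Real.pi_pos, show 2 * (-k + p) = 2 * (p - k) by ring, add_comm p]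
  congr 1
  field_simp

end SpecialIntegrals

section SchurTest

variable {X : Type*} [MeasurableSpace X] {μ : Measure X} [SFinite μ] {u w : X → ℝ≥0}
  {K : X → X → ℝ≥0∞}

lemma two_mul_mul_le_sq_div_mul_add_sq_div_mul {a b : ℝ≥0} (s t : ℝ≥0) (ha : a ≠ 0) (hb : b ≠ 0) :
    2 * (s * t) ≤ s ^ 2 / a * b + t ^ 2 / b * a := by
  rw [div_mul_eq_mul_div, div_mul_eq_mul_div, div_add_div _ _ ha hb,
    le_div_iff₀ (by positivity)]
  calc
    2 * (s * t) * (a * b) = 2 * (s * b) * (t * a) := by ring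
    _ ≤ (s * b) ^ 2 + (t * a) ^ 2 := two_mul_le_add_sq _ _
    _ = s ^ 2 * b * b + a * (t ^ 2 * a) := by ring

lemma lintegral_lintegral_mul_symm_kernel_le (hu : AEMeasurable u μ) (hw : AEMeasurable w μ)
    (w_ne_zero : ∀ᵐ x ∂μ, w x ≠ 0) (hK : Measurable (Function.uncurry K))
    (K_symm : ∀ x y, K x y = K y x) :
    ∫⁻ x, ∫⁻ y, u x * (u y * K x y) ∂μ ∂μ
      ≤ ∫⁻ x, ↑(u x ^ 2 / w x) * ∫⁻ y, w y * K x y ∂μ ∂μ := by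
  let A : X × X → ℝ≥0∞ := fun z ↦ ↑(u z.1 ^ 2 / w z.1) * (w z.2 * K z.1 z.2)
  have hK' : Measurable fun z : X × X ↦ K z.1 z.2 := hK
  have hA : AEMeasurable A (μ.prod μ) :=
    ((hu.pow_const 2).div hw).comp_fst.coe_nnreal_ennreal.mul
      (hw.comp_snd.coe_nnreal_ennreal.mul hK'.aemeasurable)
  have pointwise : ∀ᵐ z ∂μ.prod μ,
      2 * (↑(u z.1) * (↑(u z.2) * K z.1 z.2)) ≤ A z + A z.swap := by
    filter_upwards [Measure.quasiMeasurePreserving_fst.ae w_ne_zero,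
      Measure.quasiMeasurePreserving_snd.ae w_ne_zero] with z h₁ h₂
    have amgm := two_mul_mul_le_sq_div_mul_add_sq_div_mul (u z.1) (u z.2) h₁ h₂
    calc
      2 * (↑(u z.1) * (↑(u z.2) * K z.1 z.2))
        = ↑(2 * (u z.1 * u z.2)) * K z.1 z.2 := by push_cast; ring
      _ ≤ ↑(u z.1 ^ 2 / w z.1 * w z.2 + u z.2 ^ 2 / w z.2 * w z.1) * K z.1 z.2 := by gcongr
      _ = A z + A z.swap := by
        simp only [A, Prod.fst_swap, Prod.snd_swap, K_symm z.2 z.1, ENNReal.coe_add,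
          ENNReal.coe_mul]
        ring
  have doubled : 2 * ∫⁻ z, u z.1 * (u z.2 * K z.1 z.2) ∂μ.prod μ ≤ 2 * ∫⁻ z, A z ∂μ.prod μ := by
    calc
      _ = ∫⁻ z, 2 * (↑(u z.1) * (↑(u z.2) * K z.1 z.2)) ∂μ.prod μ :=
        (lintegral_const_mul' _ _ ENNReal.ofNat_ne_top).symm
      _ ≤ ∫⁻ z, A z + A z.swap ∂μ.prod μ := lintegral_mono_ae pointwise
      _ = 2 * ∫⁻ z, A z ∂μ.prod μ := by
        rw [lintegral_add_left' hA, lintegral_prod_swap, two_mul]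
  calc
    _ = ∫⁻ z, u z.1 * (u z.2 * K z.1 z.2) ∂μ.prod μ :=
      (lintegral_prod _ (hu.comp_fst.coe_nnreal_ennreal.mul
        (hu.comp_snd.coe_nnreal_ennreal.mul hK'.aemeasurable))).symm
    _ ≤ ∫⁻ z, A z ∂μ.prod μ :=
      (ENNReal.mul_le_mul_iff_right two_ne_zero ENNReal.ofNat_ne_top).1 doubled
    _ = _ := by
      rw [lintegral_prod _ hA]
      simp only [A, lintegral_const_mul' _ _ ENNReal.coe_ne_top]

end SchurTest

section GaussianFourier

variable {l : ℝ} {g : ℝ → ℂ}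

lemma integral_fourier_mul_eq_integral_mul_fourier {h : ℝ → ℂ} (hg : Integrable g)
    (hh : Integrable h) : ∫ ξ, 𝓕 g ξ * h ξ = ∫ x, g x * 𝓕 h x := by
  simpa using! VectorFourier.integral_bilin_fourierIntegral_eq_flip (ContinuousLinearMap.mul ℂ ℂ)
    (L := innerₗ ℝ) Real.continuous_fourierChar continuous_inner hg hh

lemma integrable_exp_neg_pi_mul_sq_mul (hl : 0 < l) :
    Integrable fun ξ : ℝ ↦ Real.exp (-(Real.pi * ξ ^ 2 * l)) := by
  convert integrable_exp_neg_mul_sq (mul_pos Real.pi_pos hl) using 3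
  ring

lemma continuous_fourier_of_integrable (hg : Integrable g) : Continuous (𝓕 g) :=
  VectorFourier.fourierIntegral_continuous Real.continuous_fourierChar
    (innerSL ℝ).continuous₂ hg

lemma norm_fourier_le_integral_norm (g : ℝ → ℂ) (ξ : ℝ) : ‖𝓕 g ξ‖ ≤ ∫ x, ‖g x‖ :=
  VectorFourier.norm_fourierIntegral_le_integral_norm _ _ _ g ξ

lemma fourier_modulated_gaussian (hl : 0 < l) (x y : ℝ) :
    𝓕 (fun ξ : ℝ ↦ cexp (-Real.pi * (l : ℂ) * ξ ^ 2 + 2 * Real.pi * (I * (x : ℂ)) * ξ)) y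
      = gaussianKernel l (x - y) := by
  have exponent : -(Real.pi : ℂ) / l * ((y : ℂ) + I * (I * x)) ^ 2
      = ((-(Real.pi * (x - y) ^ 2 / l) : ℝ) : ℂ) := by
    rw [← mul_assoc, I_mul_I]
    push_cast
    ring
  have prefactor : (1 : ℂ) / (l : ℂ) ^ (1 / 2 : ℂ) = ((l ^ (-(1 / 2) : ℝ) : ℝ) : ℂ) := by
    rw [ofReal_cpow hl.le, one_div, ← cpow_neg]
    push_cast
    rfl
  rw [fourier_gaussian_pi' (by simpa using hl)]
  simp only [exponent, prefactor, gaussianKernel, ofReal_mul, ofReal_exp]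

lemma integrable_modulated_gaussian (hl : 0 < l) (x : ℝ) :
    Integrable fun ξ : ℝ ↦
      cexp (-Real.pi * (l : ℂ) * ξ ^ 2 + 2 * Real.pi * (I * (x : ℂ)) * ξ) := by
  simpa using integrable_cexp_quadratic' (b := -Real.pi * (l : ℂ))
    (by simpa using mul_pos Real.pi_pos hl) (2 * Real.pi * (I * (x : ℂ))) 0

lemma fourier_gaussian_mul_conj_fourier (hl : 0 < l) (hg : Integrable g) (x : ℝ) :
    𝓕 (fun ξ : ℝ ↦ (Real.exp (-(Real.pi * ξ ^ 2 * l)) : ℂ) * starRingEnd ℂ (𝓕 g ξ)) x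
      = starRingEnd ℂ (∫ y, g y * gaussianKernel l (x - y)) := by
  calc
    _ = starRingEnd ℂ (∫ ξ : ℝ, 𝓕 g ξ *
          cexp (-Real.pi * (l : ℂ) * ξ ^ 2 + 2 * Real.pi * (I * (x : ℂ)) * ξ)) := by
      rw [Real.fourier_real_eq_integral_exp_smul, ← integral_conj]
      refine integral_congr_ae (.of_forall fun ξ ↦ ?_)
      simp only [smul_eq_mul, map_mul, ← exp_conj, ofReal_exp]
      rw [← mul_assoc, ← Complex.exp_add, mul_comm]
      congr 2
      simp [map_ofNat (starRingEnd ℂ) 2]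
      ring
    _ = _ := by
      rw [integral_fourier_mul_eq_integral_mul_fourier hg (integrable_modulated_gaussian hl x)]
      simp_rw [fourier_modulated_gaussian hl]

lemma integral_gaussian_mul_norm_fourier_sq (hl : 0 < l) (hg : Integrable g) :
    ((∫ ξ, Real.exp (-(Real.pi * ξ ^ 2 * l)) * ‖𝓕 g ξ‖ ^ 2 : ℝ) : ℂ)
      = ∫ x, g x * starRingEnd ℂ (∫ y, g y * gaussianKernel l (x - y)) := by
  have integrable_damped : Integrable fun ξ : ℝ ↦
      (Real.exp (-(Real.pi * ξ ^ 2 * l)) : ℂ) * starRingEnd ℂ (𝓕 g ξ) :=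
    (integrable_exp_neg_pi_mul_sq_mul hl).ofReal.mul_bdd
      (continuous_conj.comp (continuous_fourier_of_integrable hg)).aestronglyMeasurable
      (.of_forall fun ξ ↦ (RCLike.norm_conj _).trans_le (norm_fourier_le_integral_norm g ξ))
  simp_rw [← fourier_gaussian_mul_conj_fourier hl hg]
  rw [← integral_fourier_mul_eq_integral_mul_fourier hg integrable_damped,
    ← integral_complex_ofReal]
  refine integral_congr_ae (.of_forall fun ξ ↦ ?_)
  simp only
  rw [mul_left_comm, mul_conj, normSq_eq_norm_sq, ofReal_mul]

lemma lintegral_gaussian_mul_enorm_fourier_sq_le (hl : 0 < l) (hg : Integrable g) :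
    ∫⁻ ξ, ENNReal.ofReal (Real.exp (-(Real.pi * ξ ^ 2 * l))) * ‖𝓕 g ξ‖ₑ ^ 2
      ≤ ∫⁻ x, ∫⁻ y, ‖g x‖ₑ * (‖g y‖ₑ * ENNReal.ofReal (gaussianKernel l (x - y))) := by
  have integrable_sq : Integrable fun ξ ↦
      Real.exp (-(Real.pi * ξ ^ 2 * l)) * ‖𝓕 g ξ‖ ^ 2 :=
    (integrable_exp_neg_pi_mul_sq_mul hl).mul_bdd
      ((continuous_fourier_of_integrable hg).norm.pow 2).aestronglyMeasurable
      (.of_forall fun ξ ↦ (norm_pow _ 2).trans_le <| pow_le_pow_left₀ (norm_nonneg _)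
        ((norm_norm _).trans_le (norm_fourier_le_integral_norm g ξ)) 2)
  calc
    _ = ∫⁻ ξ, ENNReal.ofReal (Real.exp (-(Real.pi * ξ ^ 2 * l)) * ‖𝓕 g ξ‖ ^ 2) := by
      refine lintegral_congr fun ξ ↦ ?_
      rw [ENNReal.ofReal_mul (Real.exp_nonneg _), ENNReal.ofReal_pow (norm_nonneg _), ofReal_norm]
    _ = ‖((∫ ξ, Real.exp (-(Real.pi * ξ ^ 2 * l)) * ‖𝓕 g ξ‖ ^ 2 : ℝ) : ℂ)‖ₑ := by
      rw [← ofReal_integral_eq_lintegral_ofReal integrable_sq (.of_forall fun ξ ↦ by positivity),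
        ← ofReal_norm, norm_real, Real.norm_of_nonneg (integral_nonneg fun ξ ↦ by positivity)]
    _ ≤ ∫⁻ x, ‖g x‖ₑ * ∫⁻ y, ‖g y‖ₑ * ENNReal.ofReal (gaussianKernel l (x - y)) := by
      rw [integral_gaussian_mul_norm_fourier_sq hl hg]
      refine (enorm_integral_le_lintegral_enorm _).trans (lintegral_mono fun x ↦ ?_)
      rw [enorm_mul, RCLike.enorm_conj]
      gcongr
      refine (enorm_integral_le_lintegral_enorm _).trans_eq (lintegral_congr fun y ↦ ?_)
      rw [enorm_mul, ← ofReal_norm (gaussianKernel l (x - y) : ℂ), norm_real,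
        Real.norm_of_nonneg (gaussianKernel_nonneg hl.le _)]
    _ = _ := lintegral_congr fun x ↦ (lintegral_const_mul' _ _ enorm_ne_top).symm

end GaussianFourier

section Pitt

variable {s : ℝ} {g : ℝ → ℂ}

/-- Beckner's sharp constant in Pitt's inequality `∫ |ξ|^{-s} |ĝ|² ≤ C(s) ∫ |x|^s |g|²` on the
line. -/
noncomputable def pittConst (s : ℝ) : ℝ :=
  Real.pi ^ s * (Real.Gamma ((1 - s) / 4) / Real.Gamma ((1 + s) / 4)) ^ 2

lemma pittConst_nonneg (s : ℝ) : 0 ≤ pittConst s := by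
  unfold pittConst
  positivity

lemma lintegral_abs_rpow_mul_rieszKernel_half (hs : 0 < s) (hs1 : s < 1) {x : ℝ} (hx : x ≠ 0) :
    ∫⁻ y, ENNReal.ofReal (|y| ^ (-((1 + s) / 2))) * rieszKernel (s / 2) (x - y)
      = ENNReal.ofReal (Real.Gamma (s / 2) * Real.pi ^ (-(s / 2)) * pittConst s *
          |x| ^ ((s - 1) / 2)) := by
  have eval := lintegral_abs_rpow_mul_rieszKernel (p := s / 2) (k := (1 + s) / 4)
    (half_pos hs) (by linarith) (by linarith) hx
  rw [show 2 * ((1 + s) / 4) = (1 + s) / 2 by ring] at eval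
  rw [eval, pittConst, show (1 + s) / 4 - s / 2 = (1 - s) / 4 by ring,
    show (1 : ℝ) / 2 - (1 + s) / 4 = (1 - s) / 4 by ring,
    show (1 - s) / 4 + s / 2 = (1 + s) / 4 by ring,
    show 2 * (s / 2 - (1 + s) / 4) = (s - 1) / 2 by ring,
    show Real.pi ^ s = Real.pi ^ (s / 2) * Real.pi ^ (s / 2) by
      rw [← Real.rpow_add Real.pi_pos, add_halves], Real.rpow_neg Real.pi_nonneg]
  congr 1
  field_simp

lemma lintegral_lintegral_mul_rieszKernel_le (hs : 0 < s) (hs1 : s < 1)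
    (hg : AEStronglyMeasurable g) :
    ∫⁻ x, ∫⁻ y, ‖g x‖ₑ * (‖g y‖ₑ * rieszKernel (s / 2) (x - y))
      ≤ ENNReal.ofReal (Real.Gamma (s / 2) * Real.pi ^ (-(s / 2)) * pittConst s) *
        ∫⁻ x, ENNReal.ofReal (|x| ^ s) * ‖g x‖ₑ ^ 2 := by
  let weight (x : ℝ) : ℝ≥0 := (|x| ^ (-((1 + s) / 2))).toNNReal
  have weight_pos {x : ℝ} (hx : x ≠ 0) : 0 < weight x := Real.toNNReal_pos.2 (by positivity)
  calc
    _ ≤ ∫⁻ x, ↑(‖g x‖₊ ^ 2 / weight x) * ∫⁻ y, weight y * rieszKernel (s / 2) (x - y) :=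
      lintegral_lintegral_mul_symm_kernel_le hg.nnnorm.aemeasurable
        (Measurable.aemeasurable (by fun_prop))
        ((Measure.ae_ne volume 0).mono fun x hx ↦ (weight_pos hx).ne')
        (by unfold Function.uncurry; fun_prop)
        fun x y ↦ by rw [← rieszKernel_neg, neg_sub]
    _ = ∫⁻ x, ENNReal.ofReal (Real.Gamma (s / 2) * Real.pi ^ (-(s / 2)) * pittConst s) *
          (ENNReal.ofReal (|x| ^ s) * ‖g x‖ₑ ^ 2) := by
      refine lintegral_congr_ae ?_
      filter_upwards [Measure.ae_ne volume 0] with x hx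
      rw [show ∫⁻ y, weight y * rieszKernel (s / 2) (x - y) = _ from
        lintegral_abs_rpow_mul_rieszKernel_half hs hs1 hx]
      have inv_weight : (weight x)⁻¹ = (|x| ^ ((1 + s) / 2)).toNNReal := by
        simp only [weight]
        rw [← Real.toNNReal_inv, Real.rpow_neg (abs_nonneg x), inv_inv]
      have abs_rpow : |x| ^ s = |x| ^ ((1 + s) / 2) * |x| ^ ((s - 1) / 2) := by
        rw [← Real.rpow_add (abs_pos.2 hx)]
        ring_nf
      have pittConst_nonneg := pittConst_nonneg s
      rw [div_eq_mul_inv, inv_weight, abs_rpow, ENNReal.ofReal_mul (by positivity),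
        ENNReal.ofReal_mul (p := |x| ^ ((1 + s) / 2)) (by positivity), ENNReal.coe_mul,
        ENNReal.coe_pow]
      simp only [ENNReal.ofReal, enorm]
      ring
    _ = _ := lintegral_const_mul' _ _ ENNReal.ofReal_ne_top

lemma lintegral_lintegral_mul_rieszKernel_eq (p : ℝ) {u : ℝ → ℝ≥0∞} (hu : AEMeasurable u) :
    ∫⁻ x, ∫⁻ y, u x * (u y * rieszKernel p (x - y))
      = ∫⁻ l in Ioi (0 : ℝ), ENNReal.ofReal (l ^ (p - 1)) *
          ∫⁻ x, ∫⁻ y, u x * (u y * ENNReal.ofReal (gaussianKernel l (x - y))) := by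
  have kernel_aemeasurable (l : ℝ) : AEMeasurable
      (fun z : ℝ × ℝ ↦ u z.1 * (u z.2 * ENNReal.ofReal (gaussianKernel l (z.1 - z.2)))) :=
    hu.comp_fst.mul (hu.comp_snd.mul (Measurable.aemeasurable (by fun_prop)))
  calc
    _ = ∫⁻ z : ℝ × ℝ, u z.1 * (u z.2 * rieszKernel p (z.1 - z.2)) :=
      (lintegral_prod (μ := volume) (ν := volume) _
        (hu.comp_fst.mul (hu.comp_snd.mul (Measurable.aemeasurable (by fun_prop))))).symm
    _ = ∫⁻ z : ℝ × ℝ, ∫⁻ l in Ioi (0 : ℝ), ENNReal.ofReal (l ^ (p - 1)) *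
          (u z.1 * (u z.2 * ENNReal.ofReal (gaussianKernel l (z.1 - z.2)))) := by
      refine lintegral_congr fun z ↦ ?_
      rw [rieszKernel, ← lintegral_const_mul _ (by fun_prop), ← lintegral_const_mul _ (by fun_prop)]
      exact lintegral_congr fun l ↦ by ring
    _ = ∫⁻ l in Ioi (0 : ℝ), ∫⁻ z : ℝ × ℝ, ENNReal.ofReal (l ^ (p - 1)) *
          (u z.1 * (u z.2 * ENNReal.ofReal (gaussianKernel l (z.1 - z.2)))) :=
      lintegral_lintegral_swap <| (Measurable.aemeasurable (by fun_prop)).mul <|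
        (AEMeasurable.comp_fst (f := fun z : ℝ × ℝ ↦ u z.1) hu.comp_fst).mul <|
        (AEMeasurable.comp_fst (f := fun z : ℝ × ℝ ↦ u z.2) hu.comp_snd).mul <|
        Measurable.aemeasurable (by fun_prop)
    _ = _ := by
      refine lintegral_congr fun l ↦ ?_
      rw [lintegral_const_mul' _ _ ENNReal.ofReal_ne_top]
      exact congrArg _ (lintegral_prod (μ := volume) (ν := volume) _ (kernel_aemeasurable l))

lemma lintegral_abs_rpow_neg_mul_enorm_fourier_sq_eq (hs : 0 < s) (hg : Integrable g) :
    ENNReal.ofReal (Real.Gamma (s / 2) * Real.pi ^ (-(s / 2))) *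
        ∫⁻ ξ, ENNReal.ofReal (|ξ| ^ (-s)) * ‖𝓕 g ξ‖ₑ ^ 2
      = ∫⁻ l in Ioi (0 : ℝ), ENNReal.ofReal (l ^ (s / 2 - 1)) *
          ∫⁻ ξ, ENNReal.ofReal (Real.exp (-(Real.pi * ξ ^ 2 * l))) * ‖𝓕 g ξ‖ₑ ^ 2 := by
  have fourier_measurable := (continuous_fourier_of_integrable hg).measurable
  calc
    _ = ∫⁻ ξ, ∫⁻ l in Ioi (0 : ℝ), ENNReal.ofReal (l ^ (s / 2 - 1) *
          Real.exp (-(Real.pi * ξ ^ 2 * l))) * ‖𝓕 g ξ‖ₑ ^ 2 := by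
      rw [← lintegral_const_mul' _ _ ENNReal.ofReal_ne_top]
      refine lintegral_congr_ae ?_
      filter_upwards [Measure.ae_ne volume 0] with ξ hξ
      rw [lintegral_mul_const' _ _ (by finiteness),
        lintegral_rpow_mul_exp_neg_pi_mul_sq_Ioi (half_pos hs) hξ, ← mul_assoc,
        ← ENNReal.ofReal_mul (by positivity), mul_div_cancel₀ s two_ne_zero]
    _ = ∫⁻ l in Ioi (0 : ℝ), ∫⁻ ξ, ENNReal.ofReal (l ^ (s / 2 - 1) *
          Real.exp (-(Real.pi * ξ ^ 2 * l))) * ‖𝓕 g ξ‖ₑ ^ 2 :=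
      lintegral_lintegral_swap (by unfold Function.uncurry; fun_prop)
    _ = _ := by
      refine setLIntegral_congr_fun measurableSet_Ioi fun l (hl : 0 < l) ↦ ?_
      rw [← lintegral_const_mul' _ _ ENNReal.ofReal_ne_top]
      exact lintegral_congr fun ξ ↦ by rw [ENNReal.ofReal_mul (by positivity), mul_assoc]

theorem pitt_inequality (hs : 0 < s) (hs1 : s < 1) (hg : Integrable g) :
    ∫⁻ ξ, ENNReal.ofReal (|ξ| ^ (-s)) * ‖𝓕 g ξ‖ₑ ^ 2
      ≤ ENNReal.ofReal (pittConst s) * ∫⁻ x, ENNReal.ofReal (|x| ^ s) * ‖g x‖ₑ ^ 2 := by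
  have Gamma_pos : 0 < Real.Gamma (s / 2) * Real.pi ^ (-(s / 2)) := by positivity
  refine (ENNReal.mul_le_mul_iff_right (by simpa using Gamma_pos) ENNReal.ofReal_ne_top).1 ?_
  calc
    _ = ∫⁻ l in Ioi (0 : ℝ), ENNReal.ofReal (l ^ (s / 2 - 1)) *
          ∫⁻ ξ, ENNReal.ofReal (Real.exp (-(Real.pi * ξ ^ 2 * l))) * ‖𝓕 g ξ‖ₑ ^ 2 :=
      lintegral_abs_rpow_neg_mul_enorm_fourier_sq_eq hs hg
    _ ≤ ∫⁻ l in Ioi (0 : ℝ), ENNReal.ofReal (l ^ (s / 2 - 1)) *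
          ∫⁻ x, ∫⁻ y, ‖g x‖ₑ * (‖g y‖ₑ * ENNReal.ofReal (gaussianKernel l (x - y))) :=
      setLIntegral_mono' measurableSet_Ioi fun l hl ↦
        mul_le_mul_right (lintegral_gaussian_mul_enorm_fourier_sq_le hl hg) _
    _ = ∫⁻ x, ∫⁻ y, ‖g x‖ₑ * (‖g y‖ₑ * rieszKernel (s / 2) (x - y)) :=
      (lintegral_lintegral_mul_rieszKernel_eq _ hg.aestronglyMeasurable.enorm).symm
    _ ≤ _ := lintegral_lintegral_mul_rieszKernel_le hs hs1 hg.aestronglyMeasurable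
    _ = _ := by rw [ENNReal.ofReal_mul Gamma_pos.le, mul_assoc]

end Pitt

section LogarithmicWeight

lemma log_abs_le_two_mul_one_add_sq_rpow (x : ℝ) :
    Real.log |x| ≤ 2 * (1 + x ^ 2) ^ (1 / 4 : ℝ) := by
  have log_sq := Real.log_le_rpow_div (sq_nonneg x) (by norm_num : (0 : ℝ) < 1 / 4)
  have mono : (x ^ 2) ^ (1 / 4 : ℝ) ≤ (1 + x ^ 2) ^ (1 / 4 : ℝ) :=
    Real.rpow_le_rpow (sq_nonneg x) (by linarith) (by norm_num)
  rw [Real.log_pow] at log_sq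
  rw [Real.log_abs]
  push_cast at log_sq
  linarith

lemma integrable_abs_log_abs_div_one_add_sq :
    Integrable fun x : ℝ ↦ |Real.log (|x|)| / (1 + x ^ 2) := by
  have measurable : Measurable fun x : ℝ ↦ |Real.log (|x|)| / (1 + x ^ 2) := by
    have := Real.measurable_log
    fun_prop
  have near_zero : IntegrableOn (fun x : ℝ ↦ |Real.log (|x|)| / (1 + x ^ 2)) (Icc (-1) 1) := by
    have log_integrable : IntegrableOn Real.log (Icc (-1) 1) :=
      (intervalIntegrable_iff_integrableOn_Icc_of_le (by norm_num)).1
        intervalIntegral.intervalIntegrable_log'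
    refine Integrable.mono log_integrable measurable.aestronglyMeasurable (.of_forall fun x ↦ ?_)
    rw [Real.norm_of_nonneg (by positivity), Real.log_abs, Real.norm_eq_abs]
    exact div_le_self (abs_nonneg _) (by linarith [sq_nonneg x])
  have away_from_zero :
      IntegrableOn (fun x : ℝ ↦ |Real.log (|x|)| / (1 + x ^ 2)) (Icc (-1) 1)ᶜ := by
    have majorant : Integrable fun x : ℝ ↦ 2 * (1 + ‖x‖ ^ 2) ^ (-(3 / 2 : ℝ) / 2) :=
      (integrable_rpow_neg_one_add_norm_sq (by norm_num)).const_mul 2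
    refine majorant.integrableOn.mono' measurable.aestronglyMeasurable ?_
    filter_upwards [ae_restrict_mem measurableSet_Icc.compl] with x hx
    have one_le : 1 ≤ |x| := (not_le.1 (mt abs_le.1 hx)).le
    have rpow_split :
        (1 + x ^ 2) ^ (-(3 / 2 : ℝ) / 2) = (1 + x ^ 2) ^ (1 / 4 : ℝ) / (1 + x ^ 2) := by
      rw [← Real.rpow_sub_one (by positivity)]
      norm_num
    rw [Real.norm_of_nonneg (by positivity), abs_of_nonneg (Real.log_nonneg one_le),
      Real.norm_eq_abs, sq_abs, rpow_split, ← mul_div_assoc]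
    gcongr
    exact log_abs_le_two_mul_one_add_sq_rpow x
  rw [← integrableOn_univ, ← union_compl_self (Icc (-1 : ℝ) 1)]
  exact near_zero.union away_from_zero

variable {F : ℝ → ℝ} {C : ℝ}

lemma norm_log_abs_mul_le (hF : ∀ x, |F x| ≤ C / (1 + x ^ 2)) (x : ℝ) :
    ‖Real.log |x| * F x‖ ≤ C * (|Real.log (|x|)| / (1 + x ^ 2)) := by
  calc
    _ = |Real.log (|x|)| * |F x| := by rw [norm_mul, Real.norm_eq_abs, Real.norm_eq_abs]
    _ ≤ |Real.log (|x|)| * (C / (1 + x ^ 2)) := by gcongr; exact hF x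
    _ = _ := by ring

lemma integrable_log_abs_mul (F_meas : Measurable F) (hF : ∀ x, |F x| ≤ C / (1 + x ^ 2)) :
    Integrable fun x ↦ Real.log |x| * F x :=
  (integrable_abs_log_abs_div_one_add_sq.const_mul C).mono'
    ((Real.measurable_log.comp continuous_abs.measurable).mul F_meas).aestronglyMeasurable
    (.of_forall (norm_log_abs_mul_le hF))

end LogarithmicWeight

section SchwartzDecay

variable {s : ℝ}

lemma abs_rpow_le_one_add_sq (hs : s ∈ Icc (0 : ℝ) 2) (x : ℝ) : |x| ^ s ≤ 1 + x ^ 2 := by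
  rcases le_total |x| 1 with h | h
  · linarith [Real.rpow_le_one (abs_nonneg x) h hs.1, sq_nonneg x]
  · calc
      |x| ^ s ≤ |x| ^ (2 : ℝ) := Real.rpow_le_rpow_of_exponent_le h hs.2
      _ = x ^ 2 := by rw [Real.rpow_two, sq_abs]
      _ ≤ 1 + x ^ 2 := by linarith

lemma exists_one_add_sq_mul_norm_le (g : 𝓢(ℝ, ℂ)) : ∃ C, ∀ x, (1 + x ^ 2) * ‖g x‖ ≤ C := by
  obtain ⟨C₀, -, bound⟩ := g.decay 0 0
  obtain ⟨C₂, -, sq_bound⟩ := g.decay 2 0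
  simp only [pow_zero, norm_iteratedFDeriv_zero, one_mul, Real.norm_eq_abs, sq_abs]
    at bound sq_bound
  exact ⟨C₀ + C₂, fun x ↦ by linarith [bound x, sq_bound x]⟩

lemma exists_abs_rpow_mul_norm_sq_le (g : 𝓢(ℝ, ℂ)) :
    ∃ C, ∀ s ∈ Icc (0 : ℝ) 2, ∀ x, |x| ^ s * ‖g x‖ ^ 2 ≤ C / (1 + x ^ 2) := by
  obtain ⟨C, hC⟩ := exists_one_add_sq_mul_norm_le g
  refine ⟨C ^ 2, fun s hs x ↦ ?_⟩
  rw [le_div_iff₀ (by positivity)]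
  calc
    |x| ^ s * ‖g x‖ ^ 2 * (1 + x ^ 2) ≤ (1 + x ^ 2) * ‖g x‖ ^ 2 * (1 + x ^ 2) := by
      gcongr
      exact abs_rpow_le_one_add_sq hs x
    _ = ((1 + x ^ 2) * ‖g x‖) ^ 2 := by ring
    _ ≤ C ^ 2 := pow_le_pow_left₀ (by positivity) (hC x) 2

lemma integrable_norm_sq (g : 𝓢(ℝ, ℂ)) : Integrable fun x ↦ ‖g x‖ ^ 2 :=
  (g.memLp 2).integrable_norm_pow two_ne_zero

lemma integrable_abs_rpow_mul_norm_sq (hs : s ∈ Icc (0 : ℝ) 2) (g : 𝓢(ℝ, ℂ)) :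
    Integrable fun x ↦ |x| ^ s * ‖g x‖ ^ 2 := by
  obtain ⟨C, hC⟩ := exists_abs_rpow_mul_norm_sq_le g
  refine (integrable_inv_one_add_sq.const_mul C).mono'
    (by have := g.continuous.measurable; fun_prop) (.of_forall fun x ↦ ?_)
  rw [Real.norm_of_nonneg (by positivity)]
  exact hC s hs x

lemma integrable_log_abs_mul_abs_rpow_mul_norm_sq (hs : s ∈ Icc (0 : ℝ) 2) (g : 𝓢(ℝ, ℂ)) :
    Integrable fun x ↦ Real.log |x| * (|x| ^ s * ‖g x‖ ^ 2) := by
  obtain ⟨C, hC⟩ := exists_abs_rpow_mul_norm_sq_le g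
  refine integrable_log_abs_mul (C := C) (by have := g.continuous.measurable; fun_prop) fun x ↦ ?_
  rw [abs_of_nonneg (by positivity)]
  exact hC s hs x

lemma integrable_log_abs_mul_norm_sq (g : 𝓢(ℝ, ℂ)) :
    Integrable fun x ↦ Real.log |x| * ‖g x‖ ^ 2 := by
  simpa using integrable_log_abs_mul_abs_rpow_mul_norm_sq (s := 0) (by simp) g

lemma tendsto_integral_log_abs_mul_abs_rpow_mul_norm_sq (g : 𝓢(ℝ, ℂ)) :
    Tendsto (fun s : ℝ ↦ ∫ x, Real.log |x| * (|x| ^ s * ‖g x‖ ^ 2)) (𝓝[>] 0)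
      (𝓝 (∫ x, Real.log |x| * ‖g x‖ ^ 2)) := by
  obtain ⟨C, hC⟩ := exists_abs_rpow_mul_norm_sq_le g
  have small_exponent : ∀ᶠ s : ℝ in 𝓝[>] 0, s ∈ Icc (0 : ℝ) 2 :=
    Filter.mem_of_superset (Ioo_mem_nhdsGT two_pos) Ioo_subset_Icc_self
  refine tendsto_integral_filter_of_dominated_convergence
    (fun x ↦ C * (|Real.log (|x|)| / (1 + x ^ 2))) ?_ ?_
    (integrable_abs_log_abs_div_one_add_sq.const_mul C) ?_
  · filter_upwards [small_exponent] with s hs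
    exact (integrable_log_abs_mul_abs_rpow_mul_norm_sq hs g).aestronglyMeasurable
  · filter_upwards [small_exponent] with s hs
    refine .of_forall fun x ↦
      norm_log_abs_mul_le (F := fun x ↦ |x| ^ s * ‖g x‖ ^ 2) (fun x ↦ ?_) x
    rw [abs_of_nonneg (by positivity)]
    exact hC s hs x
  · filter_upwards [Measure.ae_ne volume 0] with x hx
    have continuous : Continuous fun s : ℝ ↦ Real.log |x| * (|x| ^ s * ‖g x‖ ^ 2) := by
      have := Real.continuous_const_rpow (abs_pos.2 hx).ne'
      fun_prop
    simpa using (continuous.tendsto 0).mono_left (nhdsWithin_le_nhds (s := Ioi 0))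

end SchwartzDecay

section LogarithmicUncertainty

variable {s : ℝ}

lemma one_sub_mul_log_le_rpow_neg {x : ℝ} (hx : 0 < x) (s : ℝ) :
    1 - s * Real.log x ≤ x ^ (-s) := by
  rw [Real.rpow_def_of_pos hx]
  linarith [Real.add_one_le_exp (Real.log x * -s)]

lemma rpow_le_one_add_mul_log_mul_rpow {x : ℝ} (hx : 0 < x) (s : ℝ) :
    x ^ s ≤ 1 + s * (Real.log x * x ^ s) := by
  have tangent := mul_le_mul_of_nonneg_right (one_sub_mul_log_le_rpow_neg hx s)
    (Real.rpow_nonneg hx.le s)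
  rw [← Real.rpow_add hx, neg_add_cancel, Real.rpow_zero] at tangent
  linarith

lemma pittConst_zero : pittConst 0 = 1 := by
  have Gamma_ne : Real.Gamma (1 / 4) ≠ 0 := by positivity
  rw [pittConst, sub_zero, add_zero, div_self Gamma_ne, one_pow, mul_one, Real.rpow_zero]

lemma hasDerivAt_pittConst_zero : HasDerivAt pittConst
    (Real.log Real.pi - deriv Real.Gamma (1 / 4) / Real.Gamma (1 / 4)) 0 := by
  have Gamma_ne : Real.Gamma (1 / 4) ≠ 0 := by positivity
  have deriv_Gamma : HasDerivAt Real.Gamma (deriv Real.Gamma (1 / 4)) (1 / 4) :=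
    (Real.differentiableAt_Gamma fun m h ↦ by linarith [(m.cast_nonneg : (0 : ℝ) ≤ m)]).hasDerivAt
  have deriv_numerator : HasDerivAt (fun s : ℝ ↦ Real.Gamma ((1 - s) / 4))
      (deriv Real.Gamma (1 / 4) * (-1 / 4)) 0 :=
    HasDerivAt.comp (h₂ := Real.Gamma) 0 (by simpa using deriv_Gamma)
      (((hasDerivAt_id 0).const_sub 1).div_const 4)
  have deriv_denominator : HasDerivAt (fun s : ℝ ↦ Real.Gamma ((1 + s) / 4))
      (deriv Real.Gamma (1 / 4) * (1 / 4)) 0 :=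
    HasDerivAt.comp (h₂ := Real.Gamma) 0 (by simpa using deriv_Gamma)
      (((hasDerivAt_id 0).const_add 1).div_const 4)
  have deriv_pi_rpow : HasDerivAt (fun s : ℝ ↦ Real.pi ^ s) (Real.log Real.pi) 0 := by
    simpa using (Real.hasStrictDerivAt_const_rpow Real.pi_pos 0).hasDerivAt
  refine (deriv_pi_rpow.mul
    ((deriv_numerator.div deriv_denominator (by simpa using Gamma_ne)).pow 2)).congr_deriv ?_
  simp only [Pi.div_apply, Pi.pow_apply, sub_zero, add_zero, Real.rpow_zero]
  field_simp
  ring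

lemma integrable_and_integral_abs_rpow_neg_mul_norm_fourier_sq_le (hs : 0 < s) (hs1 : s < 1)
    (g : 𝓢(ℝ, ℂ)) :
    Integrable (fun ξ ↦ |ξ| ^ (-s) * ‖𝓕 g ξ‖ ^ 2) ∧
      ∫ ξ, |ξ| ^ (-s) * ‖𝓕 g ξ‖ ^ 2 ≤ pittConst s * ∫ x, |x| ^ s * ‖g x‖ ^ 2 := by
  have ofReal_mul_norm_sq {t : ℝ} (ht : 0 ≤ t) (z : ℂ) :
      ENNReal.ofReal (t * ‖z‖ ^ 2) = ENNReal.ofReal t * ‖z‖ₑ ^ 2 := by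
    rw [ENNReal.ofReal_mul ht, ENNReal.ofReal_pow (norm_nonneg _), ofReal_norm]
  have pitt : ∫⁻ ξ, ENNReal.ofReal (|ξ| ^ (-s) * ‖𝓕 g ξ‖ ^ 2)
      ≤ ENNReal.ofReal (pittConst s * ∫ x, |x| ^ s * ‖g x‖ ^ 2) := by
    rw [ENNReal.ofReal_mul (pittConst_nonneg s), ofReal_integral_eq_lintegral_ofReal
      (integrable_abs_rpow_mul_norm_sq ⟨hs.le, by linarith⟩ g)
      (.of_forall fun x ↦ by positivity)]
    simp_rw [ofReal_mul_norm_sq (Real.rpow_nonneg (abs_nonneg _) _), SchwartzMap.fourier_coe]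
    exact pitt_inequality hs hs1 g.integrable
  have fourier_integrable : Integrable fun ξ ↦ |ξ| ^ (-s) * ‖𝓕 g ξ‖ ^ 2 := by
    refine ⟨(by have := (𝓕 g).continuous.measurable; fun_prop), ?_⟩
    rw [hasFiniteIntegral_iff_ofReal (.of_forall fun ξ ↦ by positivity)]
    exact pitt.trans_lt ENNReal.ofReal_lt_top
  refine ⟨fourier_integrable, (ENNReal.ofReal_le_ofReal_iff (mul_nonneg (pittConst_nonneg s)
    (integral_nonneg fun x ↦ by positivity))).1 ?_⟩
  rwa [ofReal_integral_eq_lintegral_ofReal fourier_integrable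
    (.of_forall fun ξ ↦ by positivity)]

lemma neg_integral_log_abs_mul_norm_fourier_sq_le (hs : 0 < s) (hs1 : s < 1) (g : 𝓢(ℝ, ℂ)) :
    -∫ ξ, Real.log |ξ| * ‖𝓕 g ξ‖ ^ 2
      ≤ s⁻¹ * (pittConst s - 1) * (∫ x, ‖g x‖ ^ 2)
        + pittConst s * ∫ x, Real.log |x| * (|x| ^ s * ‖g x‖ ^ 2) := by
  have hs_mem : s ∈ Icc (0 : ℝ) 2 := ⟨hs.le, by linarith⟩
  obtain ⟨fourier_integrable, pitt⟩ :=
    integrable_and_integral_abs_rpow_neg_mul_norm_fourier_sq_le hs hs1 g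
  have fourier_side : (∫ x, ‖g x‖ ^ 2) - s * ∫ ξ, Real.log |ξ| * ‖𝓕 g ξ‖ ^ 2
      ≤ ∫ ξ, |ξ| ^ (-s) * ‖𝓕 g ξ‖ ^ 2 := by
    have log_integrable := (integrable_log_abs_mul_norm_sq (𝓕 g)).const_mul s
    rw [← SchwartzMap.integral_norm_sq_fourier g, ← integral_const_mul,
      ← integral_sub (integrable_norm_sq _) log_integrable]
    refine integral_mono_ae ((integrable_norm_sq _).sub log_integrable) fourier_integrable ?_
    filter_upwards [Measure.ae_ne volume 0] with ξ hξ
    linarith [mul_le_mul_of_nonneg_right (one_sub_mul_log_le_rpow_neg (abs_pos.2 hξ) s)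
      (sq_nonneg ‖𝓕 g ξ‖)]
  have space_side : ∫ x, |x| ^ s * ‖g x‖ ^ 2
      ≤ (∫ x, ‖g x‖ ^ 2) + s * ∫ x, Real.log |x| * (|x| ^ s * ‖g x‖ ^ 2) := by
    have log_integrable := (integrable_log_abs_mul_abs_rpow_mul_norm_sq hs_mem g).const_mul s
    rw [← integral_const_mul, ← integral_add (integrable_norm_sq g) log_integrable]
    refine integral_mono_ae (integrable_abs_rpow_mul_norm_sq hs_mem g)
      ((integrable_norm_sq g).add log_integrable) ?_
    filter_upwards [Measure.ae_ne volume 0] with x hx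
    linarith [mul_le_mul_of_nonneg_right (rpow_le_one_add_mul_log_mul_rpow (abs_pos.2 hx) s)
      (sq_nonneg ‖g x‖)]
  have combined := fourier_side.trans
    (pitt.trans (mul_le_mul_of_nonneg_left space_side (pittConst_nonneg s)))
  refine le_of_mul_le_mul_left ?_ hs
  rw [mul_add, mul_assoc s⁻¹, mul_inv_cancel_left₀ hs.ne']
  linarith

theorem logarithmic_uncertainty (g : 𝓢(ℝ, ℂ)) :
    (deriv Real.Gamma (1 / 4) / Real.Gamma (1 / 4) - Real.log Real.pi) * (∫ x, ‖g x‖ ^ 2)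
      ≤ (∫ x, Real.log |x| * ‖g x‖ ^ 2) + ∫ ξ, Real.log |ξ| * ‖𝓕 g ξ‖ ^ 2 := by
  have slope : Tendsto (fun s ↦ s⁻¹ * (pittConst s - 1)) (𝓝[>] 0)
      (𝓝 (Real.log Real.pi - deriv Real.Gamma (1 / 4) / Real.Gamma (1 / 4))) := by
    simpa [pittConst_zero] using hasDerivAt_pittConst_zero.tendsto_slope_zero_right
  have pittConst_tendsto : Tendsto pittConst (𝓝[>] 0) (𝓝 1) := by
    simpa [pittConst_zero] using
      hasDerivAt_pittConst_zero.continuousAt.tendsto.mono_left nhdsWithin_le_nhds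
  have limit := ge_of_tendsto ((slope.mul_const (∫ x, ‖g x‖ ^ 2)).add
      (pittConst_tendsto.mul (tendsto_integral_log_abs_mul_abs_rpow_mul_norm_sq g))) <| by
    filter_upwards [Ioo_mem_nhdsGT one_pos] with s hs
    exact neg_integral_log_abs_mul_norm_fourier_sq_le hs.1 hs.2 g
  linarith

end LogarithmicUncertainty

section Correlation

variable {p q : ℝ → ℝ}

lemma integrable_integral_mul_comp_sub (hp : Integrable p) (hq : Integrable q) :
    Integrable fun β ↦ ∫ t, p t * q (t - β) :=
  (hp.integrable_convolution (ContinuousLinearMap.mul ℝ ℝ) hq.comp_neg).congr <|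
    .of_forall fun β ↦ by simp [convolution_def]

lemma integral_integral_mul_comp_sub (hp : Integrable p) (hq : Integrable q) :
    ∫ β, ∫ t, p t * q (t - β) = (∫ t, p t) * ∫ t, q t := by
  simpa [convolution_def, neg_sub, integral_neg_eq_self q] using
    integral_convolution (ContinuousLinearMap.mul ℝ ℝ) hp hq.comp_neg

end Correlation

section WindowedFourier

lemma norm_fourier_sq_le {g : ℝ → ℂ} (hg : Integrable g) (g_diff : Differentiable ℝ g)
    (hg' : Integrable (deriv g)) (ξ : ℝ) :
    ‖𝓕 g ξ‖ ^ 2 ≤ ((∫ t, ‖g t‖) ^ 2 + (∫ t, ‖deriv g t‖) ^ 2) / (1 + ξ ^ 2) := by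
  have abs_le : |ξ| ≤ ‖(2 * Real.pi * I * ξ : ℂ)‖ := by
    simp only [norm_mul, norm_real, norm_I, Complex.norm_ofNat, mul_one, Real.norm_eq_abs,
      abs_of_pos Real.pi_pos]
    nlinarith [Real.pi_gt_three, abs_nonneg ξ]
  have derivative_bound : |ξ| * ‖𝓕 g ξ‖ ≤ ∫ t, ‖deriv g t‖ := by
    calc
      |ξ| * ‖𝓕 g ξ‖ ≤ ‖(2 * Real.pi * I * ξ : ℂ)‖ * ‖𝓕 g ξ‖ := by gcongr
      _ = ‖𝓕 (deriv g) ξ‖ := by rw [Real.fourier_deriv hg g_diff hg', norm_smul]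
      _ ≤ ∫ t, ‖deriv g t‖ := norm_fourier_le_integral_norm _ ξ
  rw [le_div_iff₀ (by positivity)]
  calc
    ‖𝓕 g ξ‖ ^ 2 * (1 + ξ ^ 2) = ‖𝓕 g ξ‖ ^ 2 + (|ξ| * ‖𝓕 g ξ‖) ^ 2 := by
      rw [mul_pow, sq_abs]
      ring
    _ ≤ _ := by
      gcongr
      exact norm_fourier_le_integral_norm g ξ

/-- The product `t ↦ F t * v (t - β)` of `F` with the window `v` translated by `β`, as a Schwartz
function. Its Fourier transform is the short-time Fourier transform of `F`; the window is not
conjugated. -/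
noncomputable def windowed (F v : 𝓢(ℝ, ℂ)) (β : ℝ) : 𝓢(ℝ, ℂ) :=
  SchwartzMap.pairing (ContinuousLinearMap.mul ℂ ℂ) F (SchwartzMap.compSubConstCLM ℂ β v)

variable (F v : 𝓢(ℝ, ℂ))

lemma windowed_apply (β t : ℝ) : windowed F v β t = F t * v (t - β) := by
  simp [windowed, SchwartzMap.pairing_apply_apply]

lemma deriv_windowed (β t : ℝ) :
    deriv (windowed F v β) t = windowed (SchwartzMap.derivCLM ℂ ℂ F) v β t
      + windowed F (SchwartzMap.derivCLM ℂ ℂ v) β t := by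
  have F_deriv : HasDerivAt F (deriv F t) t := F.differentiableAt.hasDerivAt
  have v_deriv : HasDerivAt (fun t ↦ v (t - β)) (deriv v (t - β)) t :=
    v.differentiableAt.hasDerivAt.comp_sub_const t β
  rw [funext (windowed_apply F v β), (F_deriv.fun_mul v_deriv).deriv]
  simp only [windowed_apply, SchwartzMap.derivCLM_apply]

lemma integral_norm_deriv_windowed_le (β : ℝ) :
    ∫ t, ‖deriv (windowed F v β) t‖
      ≤ (∫ t, ‖windowed (SchwartzMap.derivCLM ℂ ℂ F) v β t‖)
        + ∫ t, ‖windowed F (SchwartzMap.derivCLM ℂ ℂ v) β t‖ := by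
  simp_rw [deriv_windowed]
  rw [← integral_add (SchwartzMap.integrable _).norm (SchwartzMap.integrable _).norm]
  exact integral_mono ((SchwartzMap.integrable _).add (SchwartzMap.integrable _)).norm
    ((SchwartzMap.integrable _).norm.add (SchwartzMap.integrable _).norm)
    fun t ↦ norm_add_le _ _

lemma integrable_integral_norm_windowed : Integrable fun β ↦ ∫ t, ‖windowed F v β t‖ := by
  simp_rw [windowed_apply, norm_mul]
  exact integrable_integral_mul_comp_sub F.integrable.norm v.integrable.norm

lemma exists_integral_norm_windowed_le : ∃ C, ∀ β, ∫ t, ‖windowed F v β t‖ ≤ C := by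
  obtain ⟨C, -, v_bound⟩ := v.decay 0 0
  simp only [pow_zero, norm_iteratedFDeriv_zero, one_mul] at v_bound
  refine ⟨(∫ t, ‖F t‖) * C, fun β ↦ ?_⟩
  rw [← integral_mul_const]
  refine integral_mono (SchwartzMap.integrable _).norm (F.integrable.norm.mul_const C) fun t ↦ ?_
  rw [windowed_apply, norm_mul]
  exact mul_le_mul_of_nonneg_left (v_bound _) (norm_nonneg _)

lemma integrable_sq_integral_norm_windowed :
    Integrable fun β ↦ (∫ t, ‖windowed F v β t‖) ^ 2 := by
  obtain ⟨C, hC⟩ := exists_integral_norm_windowed_le F v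
  have integrable := integrable_integral_norm_windowed F v
  simp_rw [sq]
  refine integrable.mul_bdd (c := C) integrable.aestronglyMeasurable (.of_forall fun β ↦ ?_)
  rw [Real.norm_of_nonneg (integral_nonneg fun t ↦ norm_nonneg _)]
  exact hC β

lemma exists_integrable_norm_fourier_windowed_sq_le : ∃ M : ℝ → ℝ, Integrable M ∧
    ∀ β ξ, ‖𝓕 (windowed F v β) ξ‖ ^ 2 ≤ M β / (1 + ξ ^ 2) := by
  let F' := SchwartzMap.derivCLM ℂ ℂ F
  let v' := SchwartzMap.derivCLM ℂ ℂ v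
  refine ⟨fun β ↦ (∫ t, ‖windowed F v β t‖) ^ 2
    + 2 * ((∫ t, ‖windowed F' v β t‖) ^ 2 + (∫ t, ‖windowed F v' β t‖) ^ 2),
    (integrable_sq_integral_norm_windowed F v).add
      (((integrable_sq_integral_norm_windowed F' v).add
        (integrable_sq_integral_norm_windowed F v')).const_mul 2), fun β ξ ↦ ?_⟩
  have deriv_integrable : Integrable (deriv (windowed F v β)) := by
    rw [funext (deriv_windowed F v β)]
    exact (SchwartzMap.integrable _).add (SchwartzMap.integrable _)
  rw [SchwartzMap.fourier_coe]
  refine (norm_fourier_sq_le (SchwartzMap.integrable _) (SchwartzMap.differentiable _)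
    deriv_integrable ξ).trans ?_
  refine div_le_div_of_nonneg_right (add_le_add_right ?_ _) (by positivity)
  exact (pow_le_pow_left₀ (integral_nonneg fun t ↦ norm_nonneg _)
    (integral_norm_deriv_windowed_le F v β) 2).trans add_sq_le

lemma stronglyMeasurable_fourier_windowed :
    StronglyMeasurable fun z : ℝ × ℝ ↦ 𝓕 (windowed F v z.1) z.2 := by
  have := F.continuous
  have := v.continuous
  simp_rw [SchwartzMap.fourier_coe, Real.fourier_real_eq_integral_exp_smul, windowed_apply]
  refine StronglyMeasurable.integral_prod_right (f := fun (z : ℝ × ℝ) (t : ℝ) ↦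
    cexp (((-2 * Real.pi * t * z.2 : ℝ) : ℂ) * I) • (F t * v (t - z.1)))
    (Continuous.stronglyMeasurable ?_)
  fun_prop

lemma integrable_integral_log_abs_mul_norm_fourier_windowed_sq :
    Integrable fun β ↦ ∫ ξ, Real.log |ξ| * ‖𝓕 (windowed F v β) ξ‖ ^ 2 := by
  obtain ⟨M, M_integrable, hM⟩ := exists_integrable_norm_fourier_windowed_sq_le F v
  have measurable : StronglyMeasurable fun z : ℝ × ℝ ↦
      Real.log |z.2| * ‖𝓕 (windowed F v z.1) z.2‖ ^ 2 :=
    (Real.measurable_log.comp measurable_snd.abs).stronglyMeasurable.mul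
      ((stronglyMeasurable_fourier_windowed F v).norm.pow 2)
  refine (M_integrable.mul_const (∫ ξ : ℝ, |Real.log (|ξ|)| / (1 + ξ ^ 2))).mono'
    measurable.integral_prod_right.aestronglyMeasurable (.of_forall fun β ↦ ?_)
  rw [← integral_const_mul]
  refine norm_integral_le_of_norm_le (integrable_abs_log_abs_div_one_add_sq.const_mul _)
    (.of_forall (norm_log_abs_mul_le fun ξ ↦ ?_))
  rw [abs_of_nonneg (by positivity)]
  exact hM β ξ

lemma integral_integral_norm_windowed_sq :
    ∫ β, ∫ t, ‖windowed F v β t‖ ^ 2 = (∫ t, ‖F t‖ ^ 2) * ∫ t, ‖v t‖ ^ 2 := by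
  simp_rw [windowed_apply, norm_mul, mul_pow]
  exact integral_integral_mul_comp_sub (integrable_norm_sq F) (integrable_norm_sq v)

lemma integrable_integral_norm_windowed_sq :
    Integrable fun β ↦ ∫ t, ‖windowed F v β t‖ ^ 2 := by
  simp_rw [windowed_apply, norm_mul, mul_pow]
  exact integrable_integral_mul_comp_sub (integrable_norm_sq F) (integrable_norm_sq v)

theorem windowed_logarithmic_uncertainty :
    (deriv Real.Gamma (1 / 4) / Real.Gamma (1 / 4) - Real.log Real.pi) *
        ((∫ t, ‖F t‖ ^ 2) * ∫ t, ‖v t‖ ^ 2)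
      ≤ (∫ t, Real.log |t| * ‖F t‖ ^ 2) * (∫ t, ‖v t‖ ^ 2)
        + ∫ β, ∫ ξ, Real.log |ξ| * ‖𝓕 (windowed F v β) ξ‖ ^ 2 := by
  have log_windowed (β : ℝ) : ∫ t, Real.log |t| * ‖windowed F v β t‖ ^ 2
      = ∫ t, Real.log |t| * ‖F t‖ ^ 2 * ‖v (t - β)‖ ^ 2 := by
    simp_rw [windowed_apply, norm_mul, mul_pow, mul_assoc]
  have space_integrable : Integrable fun β ↦ ∫ t, Real.log |t| * ‖windowed F v β t‖ ^ 2 := by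
    simp_rw [log_windowed]
    exact integrable_integral_mul_comp_sub (integrable_log_abs_mul_norm_sq F)
      (integrable_norm_sq v)
  have fourier_integrable := integrable_integral_log_abs_mul_norm_fourier_windowed_sq F v
  rw [← integral_integral_norm_windowed_sq, ← integral_const_mul,
    ← integral_integral_mul_comp_sub (integrable_log_abs_mul_norm_sq F) (integrable_norm_sq v)]
  simp_rw [← log_windowed]
  rw [← integral_add space_integrable fourier_integrable]
  exact integral_mono ((integrable_integral_norm_windowed_sq F v).const_mul _)
    (space_integrable.add fourier_integrable) fun β ↦ logarithmic_uncertainty (windowed F v β)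

end WindowedFourier

section QuadraticPhase

lemma hasTemperateGrowth_exp_I_mul : Function.HasTemperateGrowth fun x : ℝ ↦ cexp (I * x) := by
  have iteratedDeriv_eq (n : ℕ) :
      iteratedDeriv n (fun x : ℝ ↦ cexp (I * x)) = fun x : ℝ ↦ I ^ n * cexp (I * x) := by
    induction n with
    | zero => simp
    | succ n ih =>
      ext x
      have phase_deriv : HasDerivAt (fun x : ℝ ↦ I * (x : ℂ)) (I * 1) x :=
        (ofRealCLM.hasDerivAt (x := x)).const_mul I
      rw [iteratedDeriv_succ, ih, (phase_deriv.cexp.const_mul (I ^ n)).deriv]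
      ring
  refine ⟨(contDiff_const.mul ofRealCLM.contDiff).cexp, fun n ↦ ⟨0, 1, fun x ↦ ?_⟩⟩
  rw [norm_iteratedFDeriv_eq_norm_iteratedDeriv, iteratedDeriv_eq, norm_mul, norm_pow, norm_I,
    norm_exp_I_mul_ofReal]
  simp

lemma hasTemperateGrowth_chirp (a d : ℝ) :
    Function.HasTemperateGrowth fun t : ℝ ↦ cexp (I * (2 * a * t ^ 2 + 2 * d * t : ℝ)) := by
  have phase_growth : Function.HasTemperateGrowth fun t : ℝ ↦ 2 * a * (t * t) + 2 * d * t := by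
    fun_prop
  simpa [Function.comp_def, sq] using hasTemperateGrowth_exp_I_mul.comp phase_growth

/-- The Schwartz function `t ↦ e^{i(2at² + 2dt)} f t`: the chirp is the part of the QP-WPT phase
that depends on `t` alone. -/
noncomputable def chirped (a d : ℝ) (f : 𝓢(ℝ, ℂ)) : 𝓢(ℝ, ℂ) :=
  SchwartzMap.smulLeftCLM ℂ (fun t : ℝ ↦ cexp (I * (2 * a * t ^ 2 + 2 * d * t : ℝ))) f

lemma chirped_apply (a d : ℝ) (f : 𝓢(ℝ, ℂ)) (t : ℝ) :
    chirped a d f t = cexp (I * (2 * a * t ^ 2 + 2 * d * t : ℝ)) * f t :=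
  SchwartzMap.smulLeftCLM_apply_apply (hasTemperateGrowth_chirp a d) f t

lemma norm_chirped (a d : ℝ) (f : 𝓢(ℝ, ℂ)) (t : ℝ) : ‖chirped a d f t‖ = ‖f t‖ := by
  rw [chirped_apply, norm_mul, norm_exp_I_mul_ofReal, one_mul]

/-- The conjugated wavelet `t ↦ conj (ψ_α t)` at scale `α ≠ 0`, as a Schwartz function. -/
noncomputable def conjDil (ψ : 𝓢(ℝ, ℂ)) {α : ℝ} (hα : α ≠ 0) : 𝓢(ℝ, ℂ) :=
  (α ^ (-(1 / 2) : ℝ)) • SchwartzMap.postcompCLM (conjCLE : ℂ →L[ℝ] ℂ)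
    (SchwartzMap.compCLMOfContinuousLinearEquiv ℝ
      (ContinuousLinearEquiv.unitsEquivAut ℝ (Units.mk0 α⁻¹ (inv_ne_zero hα))) ψ)

variable {α : ℝ}

lemma conjDil_apply (ψ : 𝓢(ℝ, ℂ)) (hα : α ≠ 0) (t : ℝ) :
    conjDil ψ hα t = starRingEnd ℂ (dil ψ α t) := by
  simp [conjDil, dil, SchwartzMap.postcompCLM_apply, div_eq_mul_inv]

lemma integral_norm_dil_sq (ψ : ℝ → ℂ) (hα : 0 < α) :
    ∫ t, ‖dil ψ α t‖ ^ 2 = ∫ t, ‖ψ t‖ ^ 2 := by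
  have norm_dil_sq (t : ℝ) : ‖dil ψ α t‖ ^ 2 = α⁻¹ * ‖ψ (t / α)‖ ^ 2 := by
    rw [dil, norm_mul, mul_pow, norm_real, Real.norm_eq_abs, sq_abs, ← Real.rpow_natCast,
      ← Real.rpow_mul hα.le]
    norm_num [Real.rpow_neg_one]
  simp_rw [norm_dil_sq]
  rw [integral_const_mul, Measure.integral_comp_div (fun t ↦ ‖ψ t‖ ^ 2), abs_of_pos hα,
    smul_eq_mul, inv_mul_cancel_left₀ hα.ne']

lemma integral_norm_conjDil_sq (ψ : 𝓢(ℝ, ℂ)) (hα : 0 < α) :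
    ∫ t, ‖conjDil ψ hα.ne' t‖ ^ 2 = ∫ t, ‖ψ t‖ ^ 2 := by
  simp_rw [conjDil_apply, RCLike.norm_conj, integral_norm_dil_sq ψ hα]

lemma integral_log_abs_mul_comp_mul_left {G : ℝ → ℝ} {r : ℝ} (hr : r ≠ 0) (hG : Integrable G)
    (hlogG : Integrable fun η ↦ Real.log |η| * G η) :
    ∫ ξ, Real.log |ξ| * G (r * ξ)
      = |r|⁻¹ * ((∫ η, Real.log |η| * G η) - Real.log |r| * ∫ η, G η) := by
  calc
    _ = ∫ ξ, (fun η ↦ Real.log |η| * G η - Real.log |r| * G η) (r * ξ) := by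
      refine integral_congr_ae ?_
      filter_upwards [Measure.ae_ne volume 0] with ξ hξ
      rw [abs_mul, Real.log_mul (abs_ne_zero.2 hr) (abs_ne_zero.2 hξ)]
      ring
    _ = _ := by
      rw [Measure.integral_comp_mul_left (fun η ↦ Real.log |η| * G η - Real.log |r| * G η),
        integral_sub hlogG (hG.const_mul _), integral_const_mul, abs_inv, smul_eq_mul]

variable {b : ℝ}

lemma norm_qpConst_sq (hb : 0 ≤ b) : ‖qpConst b‖ ^ 2 = b / (2 * Real.pi) := by
  rw [qpConst, norm_mul, ← ofReal_neg, norm_exp_ofReal_mul_I, mul_one, norm_real,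
    Real.norm_eq_abs, sq_abs, Real.sq_sqrt (by positivity)]

variable (a c d e : ℝ) (f ψ : 𝓢(ℝ, ℂ))

lemma QPWPT_eq_fourier_windowed (b : ℝ) (hα : α ≠ 0) (ξ β : ℝ) :
    QPWPT a b c d e ψ f ξ β α
      = qpConst b * (cexp (I * (c * ξ ^ 2 + e * ξ - a * β ^ 2 - d * β : ℝ)) *
        𝓕 (windowed (chirped a d f) (conjDil ψ hα) β) (-(b / (2 * Real.pi)) * ξ)) := by
  rw [QPWPT, SchwartzMap.fourier_coe, Real.fourier_real_eq_integral_exp_smul]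
  congr 1
  rw [← integral_const_mul]
  refine integral_congr_ae (.of_forall fun t ↦ ?_)
  beta_reduce
  have linear_phase : -2 * Real.pi * t * (-(b / (2 * Real.pi)) * ξ) = b * t * ξ := by
    field_simp
  rw [windowed_apply, chirped_apply, conjDil_apply, smul_eq_mul, linear_phase]
  simp only [← mul_assoc, ← Complex.exp_add]
  congr 3
  push_cast
  ring

lemma norm_QPWPT_sq (hb : 0 ≤ b) (hα : α ≠ 0) (ξ β : ℝ) :
    ‖QPWPT a b c d e ψ f ξ β α‖ ^ 2 = b / (2 * Real.pi) *
      ‖𝓕 (windowed (chirped a d f) (conjDil ψ hα) β) (-(b / (2 * Real.pi)) * ξ)‖ ^ 2 := by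
  rw [QPWPT_eq_fourier_windowed a c d e f ψ b hα, norm_mul, norm_mul, norm_exp_I_mul_ofReal,
    one_mul, mul_pow, norm_qpConst_sq hb]

lemma integral_log_abs_mul_norm_QPWPT_sq (hb : 0 < b) (hα : α ≠ 0) (β : ℝ) :
    ∫ ξ, Real.log |ξ| * ‖QPWPT a b c d e ψ f ξ β α‖ ^ 2
      = (∫ η, Real.log |η| * ‖𝓕 (windowed (chirped a d f) (conjDil ψ hα) β) η‖ ^ 2)
        - Real.log (b / (2 * Real.pi)) *
          ∫ t, ‖windowed (chirped a d f) (conjDil ψ hα) β t‖ ^ 2 := by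
  have ratio_pos : 0 < b / (2 * Real.pi) := by positivity
  simp_rw [norm_QPWPT_sq a c d e f ψ hb.le hα, mul_left_comm (Real.log _) (b / _)]
  rw [integral_const_mul, integral_log_abs_mul_comp_mul_left (neg_ne_zero.2 ratio_pos.ne')
      (integrable_norm_sq _) (integrable_log_abs_mul_norm_sq _), abs_neg, abs_of_pos ratio_pos,
    mul_inv_cancel_left₀ ratio_pos.ne', SchwartzMap.integral_norm_sq_fourier]

lemma integral_integral_log_abs_mul_norm_QPWPT_sq (hb : 0 < b) (hα : 0 < α) :
    ∫ β, ∫ ξ, Real.log |ξ| * ‖QPWPT a b c d e ψ f ξ β α‖ ^ 2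
      = (∫ β, ∫ η, Real.log |η| * ‖𝓕 (windowed (chirped a d f) (conjDil ψ hα.ne') β) η‖ ^ 2)
        - Real.log (b / (2 * Real.pi)) * ((∫ t, ‖f t‖ ^ 2) * ∫ t, ‖ψ t‖ ^ 2) := by
  simp_rw [integral_log_abs_mul_norm_QPWPT_sq a c d e f ψ hb hα.ne']
  rw [integral_sub (integrable_integral_log_abs_mul_norm_fourier_windowed_sq _ _)
      ((integrable_integral_norm_windowed_sq _ _).const_mul _), integral_const_mul,
    integral_integral_norm_windowed_sq, integral_norm_conjDil_sq ψ hα]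
  simp_rw [norm_chirped]

end QuadraticPhase

theorem qpwpt_logarithmic_uncertainty_general (a b c d e : ℝ) (hb : 0 < b)
    (f ψ : 𝓢(ℝ, ℂ)) (α : ℝ) (hα : 0 < α) :
    (deriv Real.Gamma (1 / 4) / Real.Gamma (1 / 4) + Real.log 2 - Real.log b) *
        ((∫ t : ℝ, ‖f t‖ ^ 2) * ∫ t : ℝ, ‖ψ t‖ ^ 2)
      ≤ (∫ t : ℝ, ‖ψ t‖ ^ 2) * (∫ t : ℝ, Real.log |t| * ‖f t‖ ^ 2)
        + ∫ β : ℝ, ∫ ξ : ℝ, Real.log |ξ| * ‖QPWPT a b c d e ψ f ξ β α‖ ^ 2 := by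
  have windowed_bound := windowed_logarithmic_uncertainty (chirped a d f) (conjDil ψ hα.ne')
  have log_ratio : Real.log (b / (2 * Real.pi)) = Real.log b - (Real.log 2 + Real.log Real.pi) := by
    rw [Real.log_div hb.ne' (by positivity), Real.log_mul two_ne_zero Real.pi_ne_zero]
  simp_rw [norm_chirped, integral_norm_conjDil_sq ψ hα] at windowed_bound
  rw [integral_integral_log_abs_mul_norm_QPWPT_sq a c d e f ψ hb hα, log_ratio]
  linarith

theorem qpwpt_logarithmic_uncertainty (a b c d e : ℝ) (hb : 0 < b)
    (f ψ : SchwartzMap ℝ ℂ) (α : ℝ) (hα : 0 < α) :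
    (∫ t : ℝ, ‖ψ t‖ ^ 2) * (∫ t : ℝ, Real.log |t| * ‖f t‖ ^ 2)
      + (∫ β : ℝ, ∫ ξ : ℝ, Real.log |ξ| * ‖QPWPT a b c d e (⇑ψ) (⇑f) ξ β α‖ ^ 2)
      ≥ (deriv Real.Gamma (1 / 4) / Real.Gamma (1 / 4) - Real.log Real.pi - Real.log b) *
        ((∫ t : ℝ, ‖f t‖ ^ 2) * ∫ t : ℝ, ‖ψ t‖ ^ 2) := by
  have log_pi_pos : 0 < Real.log Real.pi := Real.log_pos (by linarith [Real.pi_gt_three])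
  have log_two_pos : 0 < Real.log 2 := Real.log_pos one_lt_two
  refine ge_trans (qpwpt_logarithmic_uncertainty_general a b c d e hb f ψ α hα) ?_
  gcongr
  linarith
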